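/- (Helffer–Sjöstrand formula) Let f ∈ C^{k+1}(ℝ) with compact support, k ≥ 1, and M a Hermitian matrix. Then f(M) = (1/π) ∫_ℂ ∂̄F_k(f)(z) (M − zI)^{-1} d²z, where F_k(f) is the almost analytic extension F_k(f)(x+iy) = Σ_{l=0}^k ((iy)^l/l!) f^{(l)}(x) χ(y) with χ smooth, compactly supported, ≡1 near 0, and d²z is Lebesgue measure on ℂ. -/

import Mathlib

open Matrix MeasureTheory

/-- The Cauchy–Riemann operator `∂̄ = (1/2)(∂_x + i ∂_y)` applied to `F : ℂ → ℂ`. -/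
noncomputable def dbar (F : ℂ → ℂ) (z : ℂ) : ℂ :=
  (1 / 2) * (fderiv ℝ F z 1 + Complex.I * fderiv ℝ F z Complex.I)

/-- Spectral functional calculus: `f(M) = Σᵢ f(λᵢ) vᵢ vᵢ*` for a Hermitian `M`. -/
noncomputable def funcCalc {N : ℕ} {M : Matrix (Fin N) (Fin N) ℂ}
    (hM : M.IsHermitian) (f : ℝ → ℂ) : Matrix (Fin N) (Fin N) ℂ :=
  ∑ i, f (hM.eigenvalues i) •
    vecMulVec (fun a => hM.eigenvectorBasis i a)
      (fun b => (starRingEnd ℂ) (hM.eigenvectorBasis i b))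

/-!
Only two properties of the almost analytic extension `F` matter: it is `C¹` with compact support,
and it restricts to `f` on the real axis. For such an `F` the scalar case is the Cauchy–Pompeiu
formula `∫ ∂̄F(z) (a - z)⁻¹ d²z = π F(a)`. In polar coordinates `z = a + r u`, `u = e^{iθ}`, the
weighted integrand `r ∂̄F(z) (a - z)⁻¹` equals `-½ (∂_u F + i ∂_{iu} F)`: the tangential part
integrates to zero over each circle, and the radial part integrates to `-F(a)` along each ray.
Outside the finite spectrum of `M`, the resolvent `(M - z)⁻¹` is the function `λ ↦ (λ - z)⁻¹`
applied to `M`, and the functional calculus, a finite sum over the eigenvalues, commutes with the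
integral.
-/

section CauchyPompeiu

open Complex
open scoped ComplexConjugate Real

lemma fderiv_add_I_mul_fderiv_I_mul (F : ℂ → ℂ) (z u : ℂ) :
    fderiv ℝ F z u + I * fderiv ℝ F z (I * u) = 2 * conj u * dbar F z := by
  have expand (w : ℂ) : fderiv ℝ F z w = w.re * fderiv ℝ F z 1 + w.im * fderiv ℝ F z I := by
    conv_lhs => rw [← re_add_im w, ← mul_one (w.re : ℂ)]
    simp only [← real_smul, map_add, map_smul]
  rw [expand u, expand (I * u), ← re_add_im (conj u), dbar]
  simp only [I_mul_re, I_mul_im, conj_re, conj_im, ofReal_neg]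
  linear_combination u.im * fderiv ℝ F z I * I_mul_I

lemma smul_dbar_mul_inv_sub_circleMap (F : ℂ → ℂ) (a : ℂ) {r : ℝ} (hr : r ≠ 0) (θ : ℝ) :
    r • (dbar F (circleMap a r θ) * (a - circleMap a r θ)⁻¹) =
      -(1 / 2) * (fderiv ℝ F (circleMap a r θ) (exp (θ * I)) +
        I * fderiv ℝ F (circleMap a r θ) (I * exp (θ * I))) := by
  have inv_exp : (exp (θ * I))⁻¹ = conj (exp (θ * I)) := by
    rw [inv_def, normSq_eq_norm_sq, norm_exp_ofReal_mul_I]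
    simp
  have sub_circleMap : a - circleMap a r θ = -(r * exp (θ * I)) := by
    simp [circleMap]
  rw [fderiv_add_I_mul_fderiv_I_mul, sub_circleMap, real_smul, inv_neg, mul_inv, inv_exp]
  have hr' : (r : ℂ) ≠ 0 := ofReal_ne_zero.mpr hr
  field_simp

lemma continuous_dbar {F : ℂ → ℂ} (hF : ContDiff ℝ 1 F) : Continuous (dbar F) := by
  have := hF.continuous_fderiv one_ne_zero
  unfold dbar
  fun_prop

lemma hasCompactSupport_dbar {F : ℂ → ℂ} (hF : HasCompactSupport F) :
    HasCompactSupport (dbar F) :=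
  (hF.fderiv ℝ).mono fun z hz h => hz (by simp [dbar, h])

lemma locallyIntegrable_inv : LocallyIntegrable (fun z : ℂ => z⁻¹) := by
  refine locallyIntegrable_of_norm_le_rpow (C := 1) (α := 1) (by simp) (by simp) ?_ (by fun_prop)
  exact .of_forall fun z => by simp [Real.rpow_neg_one]

lemma integrable_mul_inv_sub {g : ℂ → ℂ} (hg : Continuous g) (hgc : HasCompactSupport g) (a : ℂ) :
    Integrable (fun z => g z * (a - z)⁻¹) := by
  have h := locallyIntegrable_inv.integrable_smul_left_of_hasCompactSupport
    (hg.comp (continuous_const.sub continuous_id))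
    (hgc.comp_homeomorph (Homeomorph.subLeft a))
  simpa using h.comp_sub_left a

variable {E : Type*} [NormedAddCommGroup E]

lemma integrableOn_polarCoord_target_of_continuous {h : ℝ × ℝ → E} (hh : Continuous h) {a : ℂ}
    {S : Set ℂ} (hS : Bornology.IsBounded S)
    (h_zero : ∀ r θ, circleMap a r θ ∉ S → h (r, θ) = 0) :
    IntegrableOn h polarCoord.target := by
  obtain ⟨R, hR⟩ := hS.subset_closedBall a
  have integrableOn_box : IntegrableOn h (Set.Icc (-R) R ×ˢ Set.Icc (-π) π) :=
    hh.continuousOn.integrableOn_compact (isCompact_Icc.prod isCompact_Icc)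
  refine integrableOn_box.of_forall_sdiff_eq_zero polarCoord.open_target.measurableSet ?_
  rintro ⟨r, θ⟩ ⟨⟨-, hθ⟩, h_notMem⟩
  refine h_zero r θ fun hz => h_notMem ⟨abs_le.mp ?_, Set.Ioo_subset_Icc_self hθ⟩
  simpa [circleMap, dist_eq_norm] using hR hz

variable [NormedSpace ℝ E]

lemma integral_eq_polarCoord_circleMap (f : ℂ → E) (a : ℂ) :
    ∫ z, f z = ∫ p in polarCoord.target, p.1 • f (circleMap a p.1 p.2) := by
  rw [← integral_add_left_eq_self f a, ← Complex.integral_comp_polarCoord_symm]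
  simp only [Complex.polarCoord_symm_apply, circleMap, exp_mul_I, ofReal_cos, ofReal_sin]

lemma integral_Ioi_fderiv_ray {V : Type*} [NormedAddCommGroup V] [NormedSpace ℝ V]
    [CompleteSpace E] {F : V → E} (hF : ContDiff ℝ 1 F) (hFc : HasCompactSupport F)
    (a : V) {u : V} (hu : u ≠ 0) :
    ∫ r in Set.Ioi (0 : ℝ), fderiv ℝ F (a + r • u) u = -F a := by
  have isClosedEmbedding_ray : Topology.IsClosedEmbedding fun r : ℝ => a + r • u :=
    (Homeomorph.addLeft a).isClosedEmbedding.comp (isClosedEmbedding_smul_left hu)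
  have deriv_ray (r : ℝ) :
      deriv (fun r : ℝ => F (a + r • u)) r = fderiv ℝ F (a + r • u) u := by
    have hray : HasDerivAt (fun r : ℝ => a + r • u) u r := by
      simpa using ((hasDerivAt_id r).smul_const u).const_add a
    exact ((hF.differentiable one_ne_zero _).hasFDerivAt.comp_hasDerivAt r hray).deriv
  simp only [← deriv_ray]
  simpa using HasCompactSupport.integral_Ioi_deriv_eq (f := fun r : ℝ => F (a + r • u))
    (hF.comp (by fun_prop)) (hFc.comp_isClosedEmbedding isClosedEmbedding_ray) 0

lemma intervalIntegral_fderiv_circleMap_tangent [CompleteSpace E] {F : ℂ → E}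
    (hF : ContDiff ℝ 1 F) (a : ℂ) {r : ℝ} (hr : r ≠ 0) :
    ∫ θ in -π..π, fderiv ℝ F (circleMap a r θ) (I * exp (θ * I)) = 0 := by
  have hasDerivAt_circle (θ : ℝ) : HasDerivAt (fun θ => r⁻¹ • F (circleMap a r θ))
      (fderiv ℝ F (circleMap a r θ) (I * exp (θ * I))) θ := by
    have h := ((hF.differentiable one_ne_zero _).hasFDerivAt.comp_hasDerivAt θ
      (hasDerivAt_circleMap a r θ)).const_smul r⁻¹
    have tangent : circleMap 0 r θ * I = r • (I * exp (θ * I)) := by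
      rw [circleMap_zero, real_smul]
      ring
    rwa [tangent, map_smul, inv_smul_smul₀ hr] at h
  have hcont : Continuous fun θ : ℝ => fderiv ℝ F (circleMap a r θ) (I * exp (θ * I)) := by
    have := hF.continuous_fderiv one_ne_zero
    fun_prop
  rw [intervalIntegral.integral_eq_sub_of_hasDerivAt (fun θ _ => hasDerivAt_circle θ)
    (hcont.intervalIntegrable _ _)]
  have closed : circleMap a r π = circleMap a r (-π) := by
    simp [circleMap, exp_neg]
  rw [closed, sub_self]

lemma integrableOn_fderiv_circleMap {F : ℂ → E} (hF : ContDiff ℝ 1 F)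
    (hFc : HasCompactSupport F) (a : ℂ) {v : ℝ → ℂ} (hv : Continuous v) :
    IntegrableOn (fun p : ℝ × ℝ => fderiv ℝ F (circleMap a p.1 p.2) (v p.2))
      polarCoord.target := by
  have := hF.continuous_fderiv one_ne_zero
  refine integrableOn_polarCoord_target_of_continuous (a := a) (by unfold circleMap; fun_prop)
    (hFc.fderiv ℝ).isCompact.isBounded fun r θ hz => ?_
  simp [image_eq_zero_of_notMem_tsupport hz]

lemma integral_polarCoord_target_fderiv_radial [CompleteSpace E] {F : ℂ → E}
    (hF : ContDiff ℝ 1 F) (hFc : HasCompactSupport F) (a : ℂ) :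
    ∫ p in polarCoord.target, fderiv ℝ F (circleMap a p.1 p.2) (exp (p.2 * I)) =
      -(2 * π) • F a := by
  have hint := integrableOn_fderiv_circleMap hF hFc a (v := fun θ => exp (θ * I)) (by fun_prop)
  have integral_ray (θ : ℝ) : ∫ r in Set.Ioi (0 : ℝ),
      fderiv ℝ F (circleMap a r θ) (exp (θ * I)) = -F a := by
    simpa only [circleMap, real_smul] using
      integral_Ioi_fderiv_ray hF hFc a (exp_ne_zero (θ * I))
  rw [polarCoord_target, IntegrableOn, Measure.volume_eq_prod, ← Measure.prod_restrict] at hint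
  rw [polarCoord_target, Measure.volume_eq_prod, ← Measure.prod_restrict,
    integral_prod_symm _ hint]
  simp only [integral_ray, setIntegral_const,
    Real.volume_real_Ioo_of_le (neg_le_self Real.pi_pos.le)]
  module

lemma integral_polarCoord_target_fderiv_tangent [CompleteSpace E] {F : ℂ → E}
    (hF : ContDiff ℝ 1 F) (hFc : HasCompactSupport F) (a : ℂ) :
    ∫ p in polarCoord.target, fderiv ℝ F (circleMap a p.1 p.2) (I * exp (p.2 * I)) = 0 := by
  have hint := integrableOn_fderiv_circleMap hF hFc a
    (v := fun θ => I * exp (θ * I)) (by fun_prop)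
  rw [polarCoord_target, Measure.volume_eq_prod] at hint ⊢
  rw [setIntegral_prod _ hint]
  refine setIntegral_eq_zero_of_forall_eq_zero fun r hr => ?_
  rw [← integral_Ioc_eq_integral_Ioo,
    ← intervalIntegral.integral_of_le (neg_le_self Real.pi_pos.le)]
  exact intervalIntegral_fderiv_circleMap_tangent hF a (ne_of_gt hr)

theorem integral_dbar_mul_inv_sub {F : ℂ → ℂ} (hF : ContDiff ℝ 1 F) (hFc : HasCompactSupport F)
    (a : ℂ) : ∫ z, dbar F z * (a - z)⁻¹ = π * F a := by
  have h_radial := integrableOn_fderiv_circleMap hF hFc a (v := fun θ => exp (θ * I)) (by fun_prop)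
  have h_tangent := integrableOn_fderiv_circleMap hF hFc a
    (v := fun θ => I * exp (θ * I)) (by fun_prop)
  rw [integral_eq_polarCoord_circleMap _ a,
    setIntegral_congr_fun polarCoord.open_target.measurableSet fun p hp =>
      smul_dbar_mul_inv_sub_circleMap F a (ne_of_gt hp.1) p.2,
    integral_const_mul, integral_add h_radial (h_tangent.const_mul _), integral_const_mul,
    integral_polarCoord_target_fderiv_radial hF hFc,
    integral_polarCoord_target_fderiv_tangent hF hFc, real_smul]
  push_cast
  ring

end CauchyPompeiu

section FunctionalCalculus

variable {N : ℕ} {M : Matrix (Fin N) (Fin N) ℂ}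

lemma funcCalc_apply (hM : M.IsHermitian) (f : ℝ → ℂ) (i j : Fin N) :
    funcCalc hM f i j = ∑ l, f (hM.eigenvalues l) *
      (hM.eigenvectorBasis l i * (starRingEnd ℂ) (hM.eigenvectorBasis l j)) := by
  simp [funcCalc, Matrix.sum_apply, vecMulVec_apply]

lemma funcCalc_eq_conjStarAlgAut_diagonal (hM : M.IsHermitian) (f : ℝ → ℂ) :
    funcCalc hM f = Unitary.conjStarAlgAut ℂ _ hM.eigenvectorUnitary
      (diagonal fun l => f (hM.eigenvalues l)) := by
  ext i j
  rw [funcCalc_apply, Unitary.conjStarAlgAut_apply, Matrix.mul_apply]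
  refine Finset.sum_congr rfl fun l _ => ?_
  simp only [mul_diagonal, star_apply, IsHermitian.eigenvectorUnitary_apply, RCLike.star_def]
  ring

lemma funcCalc_sub_const (hM : M.IsHermitian) (z : ℂ) :
    funcCalc hM (fun x => x - z) = M - z • (1 : Matrix (Fin N) (Fin N) ℂ) := by
  conv_rhs => rw [hM.spectral_theorem]
  rw [funcCalc_eq_conjStarAlgAut_diagonal, ← diagonal_sub, map_sub, ← smul_one_eq_diagonal,
    map_smul, map_one]
  rfl

lemma inv_sub_smul_one_eq_funcCalc (hM : M.IsHermitian) {z : ℂ}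
    (hz : ∀ l, (hM.eigenvalues l : ℂ) ≠ z) :
    (M - z • (1 : Matrix (Fin N) (Fin N) ℂ))⁻¹ = funcCalc hM fun x => (x - z)⁻¹ := by
  refine Matrix.inv_eq_right_inv ?_
  rw [← funcCalc_sub_const hM, funcCalc_eq_conjStarAlgAut_diagonal,
    funcCalc_eq_conjStarAlgAut_diagonal, ← map_mul, diagonal_mul_diagonal]
  simp only [mul_inv_cancel₀ (sub_ne_zero.mpr (hz _)), diagonal_one, map_one]

lemma funcCalc_const_mul_apply (hM : M.IsHermitian) (c : ℂ) (f : ℝ → ℂ) (i j : Fin N) :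
    funcCalc hM (fun x => c * f x) i j = c * funcCalc hM f i j := by
  simp only [funcCalc_apply, Finset.mul_sum, mul_assoc]

lemma integral_funcCalc_apply {α : Type*} [MeasurableSpace α] {μ : Measure α}
    (hM : M.IsHermitian) {g : α → ℝ → ℂ}
    (hg : ∀ l, Integrable (fun z => g z (hM.eigenvalues l)) μ) (i j : Fin N) :
    ∫ z, funcCalc hM (g z) i j ∂μ = funcCalc hM (fun x => ∫ z, g z x ∂μ) i j := by
  simp only [funcCalc_apply]
  rw [integral_finsetSum _ fun l _ => (hg l).mul_const _]
  simp only [integral_mul_const]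

end FunctionalCalculus

section AlmostAnalyticExtension

/-- The almost analytic extension `F_k(f)(x + iy) = Σ_{l ≤ k} ((iy)^l / l!) f^{(l)}(x) χ(y)` of `f`
to the complex plane, with cutoff `χ` in the imaginary direction. It is the compactly supported
function to which the Cauchy–Pompeiu formula is applied at the eigenvalues of `M`. -/
noncomputable def almostAnalyticExtension (k : ℕ) (f : ℝ → ℂ) (χ : ℝ → ℝ) (z : ℂ) : ℂ :=
  ∑ l ∈ Finset.range (k + 1),
    ((Complex.I * z.im) ^ l / (Nat.factorial l : ℂ)) * iteratedDeriv l f z.re * (χ z.im : ℂ)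

lemma tsupport_iteratedDeriv_subset {𝕜 E : Type*} [NontriviallyNormedField 𝕜]
    [NormedAddCommGroup E] [NormedSpace 𝕜 E] (f : 𝕜 → E) (l : ℕ) :
    tsupport (iteratedDeriv l f) ⊆ tsupport f := by
  induction l with
  | zero => rw [iteratedDeriv_zero]
  | succ l ih =>
    rw [iteratedDeriv_succ]
    exact tsupport_deriv_subset.trans ih

variable {k : ℕ} {f : ℝ → ℂ} {χ : ℝ → ℝ}

lemma almostAnalyticExtension_ofReal (x : ℝ) :
    almostAnalyticExtension k f χ x = f x * χ 0 := by
  rw [almostAnalyticExtension, Finset.sum_eq_single_of_mem 0 (by simp)]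
  · simp
  · intro l _ hl
    simp [hl]

lemma contDiff_almostAnalyticExtension {n : ℕ} (hf : ContDiff ℝ (k + n : ℕ) f)
    (hχ : ContDiff ℝ n χ) : ContDiff ℝ n (almostAnalyticExtension k f χ) := by
  have hre : ContDiff ℝ n Complex.re := Complex.reCLM.contDiff
  have him : ContDiff ℝ n Complex.im := Complex.imCLM.contDiff
  have hofReal : ContDiff ℝ n Complex.ofReal := Complex.ofRealCLM.contDiff
  refine ContDiff.sum fun l hl => ?_
  have hfl : ContDiff ℝ n (iteratedDeriv l f) := by
    have hlk : n + l ≤ k + n := by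
      have := Finset.mem_range.mp hl
      lia
    rw [iteratedDeriv_eq_iterate]
    exact (hf.of_le (mod_cast hlk)).iterate_deriv' n l
  exact ((((contDiff_const.mul (hofReal.comp him)).pow l).div_const _).mul (hfl.comp hre)).mul
    (hofReal.comp (hχ.comp him))

lemma hasCompactSupport_almostAnalyticExtension (hf : HasCompactSupport f)
    (hχ : HasCompactSupport χ) : HasCompactSupport (almostAnalyticExtension k f χ) := by
  refine HasCompactSupport.intro (hf.isCompact.reProdIm hχ.isCompact) fun z hz => ?_
  refine Finset.sum_eq_zero fun l _ => ?_
  by_cases him : z.im ∈ tsupport χ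
  · have hre : z.re ∉ tsupport (iteratedDeriv l f) := fun hre =>
      hz ⟨tsupport_iteratedDeriv_subset f l hre, him⟩
    simp [image_eq_zero_of_notMem_tsupport hre]
  · simp [image_eq_zero_of_notMem_tsupport him]

end AlmostAnalyticExtension

theorem helffer_sjostrand_general {F : ℂ → ℂ} (hF : ContDiff ℝ 1 F) (hFc : HasCompactSupport F)
    {N : ℕ} {M : Matrix (Fin N) (Fin N) ℂ} (hM : M.IsHermitian) (i j : Fin N) :
    funcCalc hM (fun x => F x) i j =
      (1 / Real.pi : ℂ) *
        ∫ z : ℂ, dbar F z * ((M - z • (1 : Matrix (Fin N) (Fin N) ℂ))⁻¹ i j) := by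
  have resolvent_ae : ∀ᵐ z : ℂ, dbar F z * ((M - z • (1 : Matrix (Fin N) (Fin N) ℂ))⁻¹ i j) =
      funcCalc hM (fun x => dbar F z * (x - z)⁻¹) i j := by
    filter_upwards [ae_all_iff.mpr fun l => Measure.ae_ne volume (hM.eigenvalues l : ℂ)]
      with z hz
    rw [inv_sub_smul_one_eq_funcCalc hM fun l => (hz l).symm, funcCalc_const_mul_apply]
  have pi_ne_zero : (Real.pi : ℂ) ≠ 0 := Complex.ofReal_ne_zero.mpr Real.pi_ne_zero
  rw [integral_congr_ae resolvent_ae,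
    integral_funcCalc_apply hM fun l =>
      integrable_mul_inv_sub (continuous_dbar hF) (hasCompactSupport_dbar hFc) _]
  simp only [integral_dbar_mul_inv_sub hF hFc, funcCalc_const_mul_apply]
  rw [one_div, inv_mul_cancel_left₀ pi_ne_zero]

/-- Helffer–Sjöstrand formula: for `f ∈ C^{k+1}(ℝ)` compactly supported, `k ≥ 1`, and
`M` Hermitian, `f(M) = (1/π) ∫_ℂ ∂̄ F_k(f)(z) (M − z)⁻¹ d²z`, where
`F_k(f)(x+iy) = Σ_{l ≤ k} ((iy)^l/l!) f^{(l)}(x) χ(y)` is the almost analytic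
extension of `f`. -/
theorem helffer_sjostrand (k : ℕ) (hk : 1 ≤ k)
    (f : ℝ → ℂ) (hf : ContDiff ℝ (k + 1 : ℕ) f) (hfc : HasCompactSupport f)
    (χ : ℝ → ℝ) (hχ : ContDiff ℝ (⊤ : ℕ∞) χ) (hχc : HasCompactSupport χ)
    (hχ1 : ∀ᶠ y in nhds (0 : ℝ), χ y = 1)
    (F : ℂ → ℂ)
    (hF : F = fun z => ∑ l ∈ Finset.range (k + 1),
      ((Complex.I * z.im) ^ l / (Nat.factorial l : ℂ)) * iteratedDeriv l f z.re *
        (χ z.im : ℂ))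
    (N : ℕ) (M : Matrix (Fin N) (Fin N) ℂ) (hM : M.IsHermitian) :
    ∀ i j, funcCalc hM f i j =
      (1 / Real.pi : ℂ) *
        ∫ z : ℂ, dbar F z * ((M - z • (1 : Matrix (Fin N) (Fin N) ℂ))⁻¹ i j) := by
  obtain rfl : F = almostAnalyticExtension k f χ := hF
  simpa only [almostAnalyticExtension_ofReal, hχ1.self_of_nhds, Complex.ofReal_one, mul_one] using
    helffer_sjostrand_general
      (contDiff_almostAnalyticExtension hf (hχ.of_le (mod_cast le_top)))
      (hasCompactSupport_almostAnalyticExtension hfc hχc) hM
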